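/- Let $G \subseteq [0,1]^d$ be a convex set with nonempty interior and let $B, \Gamma_1, \dots, \Gamma_d > 0$. Let $f, g : G \to \mathbb{R}$ be convex functions that are lower semicontinuous on $G$, with $|f| \le B$ and $|g| \le B$ on $G$, and with $|f(x+\lambda e_i) - f(x)| \le \Gamma_i|\lambda|$ and $|g(x+\lambda e_i) - g(x)| \le \Gamma_i|\lambda|$ whenever $x$ and $x+\lambda e_i$ both lie in $G$ ($e_1,\dots,e_d$ the standard basis of $\mathbb{R}^d$). Then $$\sup_{x\in G} |f(x) - g(x)| \le d_H\bigl(V_B(f), V_B(g)\bigr)\, \sqrt{1 + \sum_{i=1}^d \Gamma_i^2},$$ where $V_B(h) := \{(x,t) \in \mathbb{R}^d \times \mathbb{R} : x \in G,\ h(x) \le t \le B\} \subseteq \mathbb{R}^{d+1}$ and $d_H$ denotes the Hausdorff distance between subsets of $\mathbb{R}^{d+1}$ with respect to the Euclidean norm. -/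

import Mathlib

/-- The class `C(D, B, Γ)` of convex functions on `D ⊆ ℝ^d` bounded in absolute value by `B` and
with Lipschitz constant `Γ i` in the `i`-th coordinate direction, as long as both points lie
in `D`. Only the values of the function on `D` matter. -/
def convexLipClass {d : ℕ} (D : Set (EuclideanSpace ℝ (Fin d))) (B : ℝ) (Γ : Fin d → ℝ) :
    Set (EuclideanSpace ℝ (Fin d) → ℝ) :=
  {f | ConvexOn ℝ D f ∧ (∀ x ∈ D, |f x| ≤ B) ∧
    ∀ i : Fin d, ∀ x ∈ D, ∀ l : ℝ, x + l • EuclideanSpace.single i (1 : ℝ) ∈ D →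
      |f (x + l • EuclideanSpace.single i (1 : ℝ)) - f x| ≤ Γ i * |l|}

/-- The first `d` coordinates `(x_1, …, x_d)` of a point of `ℝ^{d+1}`. -/
def initCoords {d : ℕ} (z : EuclideanSpace ℝ (Fin (d + 1))) : EuclideanSpace ℝ (Fin d) :=
  WithLp.toLp 2 fun i => z i.castSucc

/-- The truncated epigraph `V_B(f)` of a function `f` on `G ⊆ ℝ^d`, as a subset of the
Euclidean space `ℝ^{d+1}`. -/
def epigraphB {d : ℕ} (G : Set (EuclideanSpace ℝ (Fin d))) (B : ℝ)
    (f : EuclideanSpace ℝ (Fin d) → ℝ) : Set (EuclideanSpace ℝ (Fin (d + 1))) :=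
  {z | initCoords z ∈ G ∧ f (initCoords z) ≤ z (Fin.last d) ∧ z (Fin.last d) ≤ B}

open Set Filter Topology

/-- A convex function on a convex set in a finite-dimensional space has a subgradient at every
interior point. -/
theorem ConvexOn.exists_subgradient {E : Type*} [NormedAddCommGroup E] [NormedSpace ℝ E]
    [FiniteDimensional ℝ E] {s : Set E} {f : E → ℝ} (hf : ConvexOn ℝ s f) {x : E}
    (hx : x ∈ interior s) : ∃ v : E →L[ℝ] ℝ, ∀ y ∈ s, f x + v (y - x) ≤ f y := by
  have hfi : ConvexOn ℝ (interior s) f := hf.subset interior_subset hf.1.interior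
  have hcont : ContinuousOn f (interior s) := hf.continuousOn_interior
  set S : Set (E × ℝ) := {p | p.1 ∈ interior s ∧ f p.1 < p.2} with hS
  have hSopen : IsOpen S := by
    have h1 : IsOpen (interior s ×ˢ (univ : Set ℝ)) := isOpen_interior.prod isOpen_univ
    have h2 : ContinuousOn (fun p : E × ℝ => p.2 - f p.1) (interior s ×ˢ (univ : Set ℝ)) :=
      continuousOn_snd.sub (hcont.comp continuousOn_fst fun p hp => hp.1)
    have h3 := h2.isOpen_inter_preimage h1 (isOpen_Ioi (a := (0 : ℝ)))
    convert h3 using 1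
    ext p
    simp [hS]
  obtain ⟨φ, hφ⟩ := geometric_hahn_banach_point_open (x := (x, f x)) hfi.convex_strict_epigraph
    hSopen (by simp)
  have hdec (y : E) (r : ℝ) : φ (y, r) = φ (y, 0) + r * φ (0, 1) := by
    have : ((y, r) : E × ℝ) = (y, 0) + r • (0, 1) := by simp
    rw [this, map_add, map_smul, smul_eq_mul]
  have hc : 0 < φ (0, 1) := by
    have h := hφ (x, f x + 1) ⟨hx, by simp⟩
    rw [hdec x (f x), hdec x (f x + 1)] at h
    linarith
  have hle (y : E) (hy : y ∈ interior s) :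
      φ (x, 0) + f x * φ (0, 1) ≤ φ (y, 0) + f y * φ (0, 1) := by
    refine le_of_forall_pos_lt_add fun ε hε => ?_
    have h := hφ (y, f y + ε / φ (0, 1)) ⟨hy, by simpa using div_pos hε hc⟩
    rw [hdec x (f x), hdec y (f y + _), add_mul, div_mul_cancel₀ _ hc.ne'] at h
    linarith
  refine ⟨-((φ (0, 1))⁻¹ • φ.comp (ContinuousLinearMap.inl ℝ E ℝ)), fun y hy => ?_⟩
  have hmid : (1 / 2 : ℝ) • x + (1 / 2 : ℝ) • y ∈ interior s :=
    hf.1.combo_interior_self_mem_interior hx hy (by norm_num) (by norm_num) (by norm_num)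
  have h1 := hle _ hmid
  have h2 := hf.2 (interior_subset hx) hy (by norm_num : (0 : ℝ) ≤ 1 / 2)
    (by norm_num : (0 : ℝ) ≤ 1 / 2) (by norm_num)
  have h3 : φ ((1 / 2 : ℝ) • x + (1 / 2 : ℝ) • y, 0) = 1 / 2 * φ (x, 0) + 1 / 2 * φ (y, 0) := by
    have : (((1 / 2 : ℝ) • x + (1 / 2 : ℝ) • y, 0) : E × ℝ)
        = (1 / 2 : ℝ) • (x, 0) + (1 / 2 : ℝ) • (y, 0) := by simp
    rw [this, map_add, map_smul, map_smul, smul_eq_mul, smul_eq_mul]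
  have h4 : φ (y - x, 0) = φ (y, 0) - φ (x, 0) := by
    rw [← map_sub]; simp
  simp only [smul_eq_mul] at h2
  have h5 := mul_le_mul_of_nonneg_right h2 hc.le
  have h6 : f x + -((φ (0, 1))⁻¹ * φ (y - x, 0)) ≤ f y := by
    rw [h4, inv_mul_eq_div, ← sub_eq_add_neg, sub_le_iff_le_add', ← sub_le_iff_le_add,
      le_div_iff₀ hc]
    linarith
  simpa using h6

/-- A linear functional whose value at each basis vector `e i` is at most `Γ i` in absolute value
has Euclidean norm at most `√(∑ Γ i ^ 2)`. -/
theorem abs_apply_le_sqrt_sum_sq_mul_norm {ι : Type*} [Fintype ι] [DecidableEq ι]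
    (v : EuclideanSpace ℝ ι →L[ℝ] ℝ) {Γ : ι → ℝ}
    (hv : ∀ i, |v (EuclideanSpace.single i 1)| ≤ Γ i) (w : EuclideanSpace ℝ ι) :
    |v w| ≤ √(∑ i, Γ i ^ 2) * ‖w‖ := by
  have hw : v w = ∑ i, w i * v (EuclideanSpace.single i 1) := by
    conv_lhs => rw [← (EuclideanSpace.basisFun ι ℝ).sum_repr w]
    simp
  calc |v w| ≤ ∑ i, |w i * v (EuclideanSpace.single i 1)| := by
        rw [hw]; exact Finset.abs_sum_le_sum_abs _ _
    _ ≤ ∑ i, Γ i * |w i| := Finset.sum_le_sum fun i _ => by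
        rw [abs_mul, mul_comm]
        exact mul_le_mul_of_nonneg_right (hv i) (abs_nonneg _)
    _ ≤ √(∑ i, Γ i ^ 2) * √(∑ i, |w i| ^ 2) := Real.sum_mul_le_sqrt_mul_sqrt _ _ _
    _ = √(∑ i, Γ i ^ 2) * ‖w‖ := by simp [EuclideanSpace.norm_eq]

section

variable {d : ℕ} {G : Set (EuclideanSpace ℝ (Fin d))} {B : ℝ} {Γ : Fin d → ℝ}
  {f g : EuclideanSpace ℝ (Fin d) → ℝ}

theorem abs_subgradient_single_le (hf : f ∈ convexLipClass G B Γ) {x : EuclideanSpace ℝ (Fin d)}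
    (hx : x ∈ interior G) {v : EuclideanSpace ℝ (Fin d) →L[ℝ] ℝ}
    (hv : ∀ y ∈ G, f x + v (y - x) ≤ f y) (i : Fin d) :
    |v (EuclideanSpace.single i 1)| ≤ Γ i := by
  have hlim (σ : ℝ) : Tendsto (fun t : ℝ => x + (σ * t) • EuclideanSpace.single i (1 : ℝ))
      (𝓝[>] 0) (𝓝 x) := by
    have : Continuous fun t : ℝ => x + (σ * t) • EuclideanSpace.single i (1 : ℝ) := by fun_prop
    simpa using (this.tendsto 0).mono_left nhdsWithin_le_nhds
  have key (σ : ℝ) (hσ : |σ| = 1) : σ * v (EuclideanSpace.single i 1) ≤ Γ i := by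
    obtain ⟨t, ht, htpos⟩ := (((hlim σ).eventually_mem (mem_interior_iff_mem_nhds.1 hx)).and
      self_mem_nhdsWithin).exists
    replace htpos : 0 < t := htpos
    have h1 := hv _ ht
    have h2 := (le_abs_self _).trans (hf.2.2 i x (interior_subset hx) _ ht)
    rw [abs_mul, hσ, one_mul, abs_of_pos htpos] at h2
    rw [add_sub_cancel_left, map_smul, smul_eq_mul] at h1
    refine le_of_mul_le_mul_right ?_ htpos
    linarith
  exact abs_le'.2 ⟨by simpa using key 1 (by simp), by simpa using key (-1) (by simp)⟩

/-- A lower semicontinuous member of `convexLipClass G B Γ` is Lipschitz on `G` with constant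
`√(∑ Γ i ^ 2)`. -/
theorem sub_le_of_mem_convexLipClass (hGint : (interior G).Nonempty)
    (hf : f ∈ convexLipClass G B Γ) (hlsc : LowerSemicontinuousOn f G)
    {x y : EuclideanSpace ℝ (Fin d)} (hx : x ∈ G) (hy : y ∈ G) :
    f x - f y ≤ √(∑ i, Γ i ^ 2) * ‖x - y‖ := by
  have hint (z : EuclideanSpace ℝ (Fin d)) (hz : z ∈ interior G) :
      f z ≤ f y + √(∑ i, Γ i ^ 2) * ‖z - y‖ := by
    obtain ⟨v, hv⟩ := hf.1.exists_subgradient hz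
    have h1 := hv y hy
    have h2 := neg_le_of_abs_le <|
      abs_apply_le_sqrt_sum_sq_mul_norm v (abs_subgradient_single_le hf hz hv) (y - z)
    rw [norm_sub_rev] at h2
    linarith
  have hxcl : x ∈ closure (interior G) := by
    rw [hf.1.1.closure_interior_eq_closure_of_nonempty_interior hGint]
    exact subset_closure hx
  have : (𝓝[interior G] x).NeBot := mem_closure_iff_nhdsWithin_neBot.1 hxcl
  have hlim : Tendsto (fun z => f y + √(∑ i, Γ i ^ 2) * ‖z - y‖) (𝓝[interior G] x)
      (𝓝 (f y + √(∑ i, Γ i ^ 2) * ‖x - y‖)) := by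
    have : Continuous fun z => f y + √(∑ i, Γ i ^ 2) * ‖z - y‖ := by fun_prop
    exact (this.tendsto x).mono_left nhdsWithin_le_nhds
  rw [sub_le_iff_le_add']
  refine le_of_forall_lt fun a ha => ?_
  obtain ⟨b, hab, hb⟩ := exists_between ha
  refine hab.trans_le (ge_of_tendsto hlim ?_)
  filter_upwards [nhdsWithin_mono x interior_subset (hlsc x hx b hb), self_mem_nhdsWithin]
    with z hz hzi
  exact hz.le.trans (hint z hzi)

theorem norm_sq_eq_initCoords_add_last (z : EuclideanSpace ℝ (Fin (d + 1))) :
    ‖z‖ ^ 2 = ‖initCoords z‖ ^ 2 + z (Fin.last d) ^ 2 := by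
  simp [EuclideanSpace.norm_sq_eq, initCoords, Fin.sum_univ_castSucc]

theorem initCoords_sub (z w : EuclideanSpace ℝ (Fin (d + 1))) :
    initCoords (z - w) = initCoords z - initCoords w := by
  ext i; simp [initCoords]

/-- The point `(x, t)` of `ℝ^{d+1}`. -/
def snocPoint (x : EuclideanSpace ℝ (Fin d)) (t : ℝ) : EuclideanSpace ℝ (Fin (d + 1)) :=
  WithLp.toLp 2 (Fin.snoc (α := fun _ => ℝ) x t)

theorem initCoords_snocPoint (x : EuclideanSpace ℝ (Fin d)) (t : ℝ) :
    initCoords (snocPoint x t) = x := by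
  ext i; simp [initCoords, snocPoint]

theorem snocPoint_last (x : EuclideanSpace ℝ (Fin d)) (t : ℝ) :
    snocPoint x t (Fin.last d) = t := by
  simp [snocPoint]

theorem snocPoint_mem_epigraphB (hf : f ∈ convexLipClass G B Γ) {x : EuclideanSpace ℝ (Fin d)}
    (hx : x ∈ G) : snocPoint x (f x) ∈ epigraphB G B f := by
  simp only [epigraphB, mem_ofPred_eq, initCoords_snocPoint, snocPoint_last]
  exact ⟨hx, le_rfl, (abs_le.1 (hf.2.1 x hx)).2⟩

theorem isBounded_epigraphB (hG : Bornology.IsBounded G) (hf : f ∈ convexLipClass G B Γ) :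
    Bornology.IsBounded (epigraphB G B f) := by
  obtain ⟨R, hR⟩ := hG.exists_norm_le
  refine isBounded_iff_forall_norm_le.2 ⟨√(R ^ 2 + B ^ 2), fun z hz => ?_⟩
  refine Real.le_sqrt_of_sq_le ?_
  rw [norm_sq_eq_initCoords_add_last]
  have h1 := abs_le.1 (hf.2.1 _ hz.1)
  refine add_le_add (pow_le_pow_left₀ (norm_nonneg _) (hR _ hz.1) 2)
    (sq_le_sq' (h1.1.trans hz.2.1) hz.2.2)

/-- If `g` is a lower semicontinuous member of `convexLipClass G B Γ` and `z ∈ V_B(g)`, then `g`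
exceeds `t` at `x` by at most `√(1 + ∑ Γ i ^ 2)` times the distance from `(x, t)` to `z`. -/
theorem sub_le_dist_mul_sqrt (hGint : (interior G).Nonempty)
    (hg : g ∈ convexLipClass G B Γ) (hlsc : LowerSemicontinuousOn g G)
    {x : EuclideanSpace ℝ (Fin d)} (hx : x ∈ G) (t : ℝ) {z : EuclideanSpace ℝ (Fin (d + 1))}
    (hz : z ∈ epigraphB G B g) :
    g x - t ≤ dist (snocPoint x t) z * √(1 + ∑ i, Γ i ^ 2) := by
  have h1 := sub_le_of_mem_convexLipClass hGint hg hlsc hx hz.1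
  have h2 : g x - t ≤ √(∑ i, Γ i ^ 2) * ‖x - initCoords z‖ + |t - z (Fin.last d)| := by
    linarith [hz.2.1, neg_abs_le (t - z (Fin.last d))]
  have h3 : dist (snocPoint x t) z ^ 2 = ‖x - initCoords z‖ ^ 2 + (t - z (Fin.last d)) ^ 2 := by
    rw [dist_eq_norm, norm_sq_eq_initCoords_add_last, initCoords_sub, initCoords_snocPoint,
      PiLp.sub_apply, snocPoint_last]
  have hS : 0 ≤ ∑ i, Γ i ^ 2 := Finset.sum_nonneg fun i _ => sq_nonneg _
  refine h2.trans (abs_le_of_sq_le_sq' ?_ (by positivity)).2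
  rw [mul_pow, h3, Real.sq_sqrt (by positivity), ← sq_abs (t - z (Fin.last d))]
  nlinarith [Real.sq_sqrt hS,
    sq_nonneg (‖x - initCoords z‖ - √(∑ i, Γ i ^ 2) * |t - z (Fin.last d)|)]

end

/-- For convex, lower semicontinuous functions `f, g` on a convex `G ⊆ [0,1]^d` with nonempty
interior, bounded by `B` and `Γ i`-Lipschitz in each coordinate direction,
`sup_G |f - g| ≤ d_H(V_B(f), V_B(g)) √(1 + ∑ Γᵢ²)`. -/
theorem sup_dist_le_hausdorffDist_epigraphs (d : ℕ)
    (G : Set (EuclideanSpace ℝ (Fin d))) (hG : Convex ℝ G)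
    (hGsub : G ⊆ {x : EuclideanSpace ℝ (Fin d) | ∀ i, 0 ≤ x i ∧ x i ≤ 1})
    (hGint : (interior G).Nonempty)
    (B : ℝ) (hB : 0 < B) (Γ : Fin d → ℝ) (hΓ : ∀ i, 0 < Γ i)
    (f g : EuclideanSpace ℝ (Fin d) → ℝ)
    (hf : f ∈ convexLipClass G B Γ) (hg : g ∈ convexLipClass G B Γ)
    (hflsc : LowerSemicontinuousOn f G) (hglsc : LowerSemicontinuousOn g G) :
    BddAbove (Set.range fun x : G => |f x - g x|) ∧
      (⨆ x : G, |f x - g x|) ≤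
        Metric.hausdorffDist (epigraphB G B f) (epigraphB G B g) *
          Real.sqrt (1 + ∑ i, Γ i ^ 2) := by
  have hbdd : Bornology.IsBounded G := by
    refine isBounded_iff_forall_norm_le.2 ⟨√d, fun x hx => ?_⟩
    refine Real.le_sqrt_of_sq_le ?_
    rw [EuclideanSpace.norm_sq_eq]
    calc ∑ i, ‖x i‖ ^ 2 ≤ ∑ _i : Fin d, (1 : ℝ) := Finset.sum_le_sum fun i _ => by
          rw [Real.norm_eq_abs, sq_abs]
          exact pow_le_one₀ (hGsub hx i).1 (hGsub hx i).2
      _ = d := by simp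
  obtain ⟨x₀, hx₀⟩ := hGint.mono interior_subset
  have hfin : Metric.hausdorffEDist (epigraphB G B f) (epigraphB G B g) ≠ ⊤ :=
    Metric.hausdorffEDist_ne_top_of_nonempty_of_bounded
      ⟨_, snocPoint_mem_epigraphB hf hx₀⟩ ⟨_, snocPoint_mem_epigraphB hg hx₀⟩
      (isBounded_epigraphB hbdd hf) (isBounded_epigraphB hbdd hg)
  have hpt (x : G) : |f x - g x| ≤
      Metric.hausdorffDist (epigraphB G B f) (epigraphB G B g) * √(1 + ∑ i, Γ i ^ 2) := by
    have hC : 0 < √(1 + ∑ i, Γ i ^ 2) :=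
      Real.sqrt_pos.2 (add_pos_of_pos_of_nonneg one_pos
        (Finset.sum_nonneg fun i _ => sq_nonneg _))
    rw [← div_le_iff₀ hC]
    refine le_of_forall_gt_imp_ge_of_dense fun r hr => ?_
    rw [div_le_iff₀ hC, abs_le']
    constructor
    · obtain ⟨z, hz, hzr⟩ := Metric.exists_dist_lt_of_hausdorffDist_lt'
        (snocPoint_mem_epigraphB hg x.2) hr hfin
      rw [dist_comm] at hzr
      exact (sub_le_dist_mul_sqrt hGint hf hflsc x.2 _ hz).trans
        (mul_le_mul_of_nonneg_right hzr.le hC.le)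
    · obtain ⟨z, hz, hzr⟩ := Metric.exists_dist_lt_of_hausdorffDist_lt
        (snocPoint_mem_epigraphB hf x.2) hr hfin
      rw [neg_sub]
      exact (sub_le_dist_mul_sqrt hGint hg hglsc x.2 _ hz).trans
        (mul_le_mul_of_nonneg_right hzr.le hC.le)
  have : Nonempty G := ⟨⟨x₀, hx₀⟩⟩
  exact ⟨⟨_, forall_mem_range.2 hpt⟩, ciSup_le hpt⟩
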